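/- Let l ≥ 1 and let (a_1,b_1),…,(a_l,b_l) be pairwise distinct pairs of nonnegative integers with a_k·p + b_k·q < (p−1)(q−1) for all k. Then there exists α ∈ K^I such that C_α is a nodal curve with exactly l nodes, and these nodes can be enumerated as (ξ_1,η_1),…,(ξ_l,η_l) in such a way that the determinant of the l×l matrix whose (i,k)-entry is ξ_i^{a_k} η_i^{b_k} is nonzero. -/

import Mathlib

open MvPolynomial

/-- The index set `I` of pairs `(ν,μ)` of nonnegative integers with `νp + μq < pq`
(for `p, q ≥ 1` the conditions `ν < q`, `μ < p` are automatic). -/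
def idxSet (p q : ℕ) : Finset (ℕ × ℕ) :=
  (Finset.range q ×ˢ Finset.range p).filter fun t => t.1 * p + t.2 * q < p * q

/-- The normed Weierstraß polynomial `F_α = Y^p − X^q + Σ a_{νμ} X^ν Y^μ`,
as a polynomial in two variables `X 0 = X`, `X 1 = Y`. -/
noncomputable def wPoly (K : Type) [CommRing K] (p q : ℕ) (a : idxSet p q → K) :
    MvPolynomial (Fin 2) K :=
  X 1 ^ p - X 0 ^ q + ∑ i : idxSet p q, C (a i) * X 0 ^ (i : ℕ × ℕ).1 * X 1 ^ (i : ℕ × ℕ).2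

/-- The Hessian determinant `G_{XX} G_{YY} − G_{XY}²` of a polynomial in `X, Y`. -/
noncomputable def hessPoly (K : Type) [CommRing K] (G : MvPolynomial (Fin 2) K) :
    MvPolynomial (Fin 2) K :=
  pderiv 0 (pderiv 0 G) * pderiv 1 (pderiv 1 G) - (pderiv 0 (pderiv 1 G)) ^ 2

/-- `P` is a singular point of the curve `G = 0`. -/
def IsSingAt (K : Type) [CommRing K] (G : MvPolynomial (Fin 2) K) (P : K × K) : Prop :=
  eval ![P.1, P.2] G = 0 ∧ eval ![P.1, P.2] (pderiv 0 G) = 0 ∧ eval ![P.1, P.2] (pderiv 1 G) = 0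

/-- `P` is a node of the curve `G = 0`. -/
def IsNodeAt (K : Type) [CommRing K] (G : MvPolynomial (Fin 2) K) (P : K × K) : Prop :=
  IsSingAt K G P ∧ eval ![P.1, P.2] (hessPoly K G) ≠ 0

theorem MvPolynomial.constantCoeff_aeval_powerSeries {K σ : Type*} [CommRing K] {z₀ : σ → K}
    {z : σ → PowerSeries K} (hz : ∀ j, PowerSeries.constantCoeff (z j) = z₀ j)
    (f : MvPolynomial σ K) : PowerSeries.constantCoeff (aeval z f) = eval z₀ f := by
  induction f using MvPolynomial.induction_on with
  | C a => simp
  | add f g hf hg => simp [hf, hg]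
  | mul_X f j hf => simp [hf, hz]

theorem MvPolynomial.dvd_aeval_sub_aeval {K R σ : Type*} [CommRing K] [CommRing R] [Algebra K R]
    {d : R} {y z : σ → R} (h : ∀ j, d ∣ y j - z j) (f : MvPolynomial σ K) :
    d ∣ aeval y f - aeval z f := by
  induction f using MvPolynomial.induction_on with
  | C a => simp
  | add f g hf hg =>
    have := dvd_add hf hg
    rw [map_add, map_add]
    convert this using 1
    ring
  | mul_X f j hf =>
    have := dvd_add (hf.mul_right (y j)) ((h j).mul_left (aeval z f))
    simp only [map_mul, aeval_X]
    convert this using 1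
    ring

/-- First order Taylor expansion along a displacement of order `n`. -/
theorem MvPolynomial.X_pow_succ_dvd_aeval_add_sub {K σ : Type*} [CommRing K] {z₀ : σ → K}
    {z : σ → PowerSeries K} (hz : ∀ j, PowerSeries.constantCoeff (z j) = z₀ j)
    (h : σ → K) {n : ℕ} (hn : n ≠ 0) (f : MvPolynomial σ K) :
    (PowerSeries.X : PowerSeries K) ^ (n + 1) ∣
      aeval (fun j => z j + PowerSeries.X ^ n * PowerSeries.C (h j)) f - aeval z f
        - PowerSeries.X ^ n *
          PowerSeries.C (eval z₀ (mkDerivation K (fun j => MvPolynomial.C (h j)) f)) := by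
  induction f using MvPolynomial.induction_on with
  | C a => simp
  | add f g hf hg =>
    have := dvd_add hf hg
    simp only [map_add]
    convert this using 1
    ring
  | mul_X f j hf =>
    have h1 : (PowerSeries.X : PowerSeries K) ∣ z j - PowerSeries.C (z₀ j) := by
      simp [PowerSeries.X_dvd_iff, hz]
    have h2 : (PowerSeries.X : PowerSeries K) ∣ aeval z f - PowerSeries.C (eval z₀ f) := by
      simp [PowerSeries.X_dvd_iff, MvPolynomial.constantCoeff_aeval_powerSeries hz]
    have h3 : (PowerSeries.X : PowerSeries K) ∣ PowerSeries.X ^ n := dvd_pow_self _ hn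
    have h4 := mul_dvd_mul (dvd_refl ((PowerSeries.X : PowerSeries K) ^ n)) (dvd_add (dvd_add
      (h1.mul_left (PowerSeries.C (eval z₀ (mkDerivation K (fun j => MvPolynomial.C (h j)) f))))
      (h2.mul_left (PowerSeries.C (h j))))
      (h3.mul_left (PowerSeries.C (eval z₀ (mkDerivation K (fun j => MvPolynomial.C (h j)) f))
        * PowerSeries.C (h j))))
    rw [← pow_succ] at h4
    have := dvd_add (hf.mul_right (z j + PowerSeries.X ^ n * PowerSeries.C (h j))) h4
    simp only [map_mul, aeval_X, Derivation.leibniz, mkDerivation_X, smul_eq_mul, map_add, eval_C,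
      eval_X]
    convert this using 1
    ring

/-- A system of polynomial equations whose differential at `z₀` is surjective can be deformed along
any direction `w` of the target: a multivariate Hensel lemma over power series. -/
theorem MvPolynomial.exists_aeval_powerSeries_eq {K σ τ : Type*} [CommRing K]
    (Φ : τ → MvPolynomial σ K) (z₀ : σ → K)
    (hsurj : ∀ w : τ → K, ∃ h : σ → K, ∀ i,
      eval z₀ (mkDerivation K (fun j => MvPolynomial.C (h j)) (Φ i)) = w i)
    (w : τ → K) :
    ∃ z : σ → PowerSeries K, (∀ j, PowerSeries.constantCoeff (z j) = z₀ j) ∧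
      ∀ i, aeval z (Φ i) = PowerSeries.C (eval z₀ (Φ i)) + PowerSeries.X * PowerSeries.C (w i) := by
  choose B hB using hsurj
  set T : τ → PowerSeries K :=
    fun i => PowerSeries.C (eval z₀ (Φ i)) + PowerSeries.X * PowerSeries.C (w i) with hT
  let step : ℕ → (σ → PowerSeries K) → (σ → PowerSeries K) := fun n z j =>
    z j + PowerSeries.X ^ (n + 1) *
      PowerSeries.C (B (fun i => - PowerSeries.coeff (n + 1) (aeval z (Φ i) - T i)) j)
  let zs : ℕ → σ → PowerSeries K := fun n => Nat.rec (fun j => PowerSeries.C (z₀ j)) step n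
  have hzs : ∀ n, zs (n + 1) = step n (zs n) := fun n => rfl
  have hconst : ∀ n j, PowerSeries.constantCoeff (zs n j) = z₀ j := by
    intro n
    induction n with
    | zero => intro j; simp [zs]
    | succ n ih => intro j; simp [hzs, step, ih]
  have happrox : ∀ n i, (PowerSeries.X : PowerSeries K) ^ (n + 1) ∣ aeval (zs n) (Φ i) - T i := by
    intro n
    induction n with
    | zero =>
      intro i
      rw [zero_add, pow_one, PowerSeries.X_dvd_iff, map_sub,
        MvPolynomial.constantCoeff_aeval_powerSeries (hconst 0)]
      simp [hT]
    | succ n ih =>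
      intro i
      have h1 := MvPolynomial.X_pow_succ_dvd_aeval_add_sub (hconst n)
        (B (fun i => - PowerSeries.coeff (n + 1) (aeval (zs n) (Φ i) - T i))) (Nat.add_one_ne_zero n) (Φ i)
      rw [hB] at h1
      change _ ∣ aeval (step n (zs n)) (Φ i) - _ - _ at h1
      have h2 : (PowerSeries.X : PowerSeries K) ^ (n + 1 + 1) ∣ aeval (zs n) (Φ i) - T i
          - PowerSeries.X ^ (n + 1) *
            PowerSeries.C (PowerSeries.coeff (n + 1) (aeval (zs n) (Φ i) - T i)) := by
        rw [PowerSeries.X_pow_dvd_iff]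
        intro m hm
        rcases Nat.lt_succ_iff_lt_or_eq.mp hm with hm | rfl
        · rw [map_sub, PowerSeries.X_pow_dvd_iff.mp (ih i) m hm, PowerSeries.coeff_X_pow_mul',
            if_neg (by omega), sub_zero]
        · simp [PowerSeries.coeff_X_pow_mul']
      have := dvd_add h1 h2
      rw [hzs]
      convert this using 1
      rw [map_neg]
      ring
  have hstab : ∀ n m j, PowerSeries.coeff n (zs (n + m) j) = PowerSeries.coeff n (zs n j) := by
    intro n m j
    induction m with
    | zero => rfl
    | succ m ih =>
      rw [← add_assoc, hzs, ← ih]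
      simp only [step, map_add]
      rw [PowerSeries.coeff_X_pow_mul', if_neg (by omega), add_zero]
  refine ⟨fun j => PowerSeries.mk fun n => PowerSeries.coeff n (zs n j), fun j => ?_, fun i => ?_⟩
  · rw [← PowerSeries.coeff_zero_eq_constantCoeff_apply, PowerSeries.coeff_mk,
      PowerSeries.coeff_zero_eq_constantCoeff_apply, hconst]
  · rw [← sub_eq_zero]
    ext n
    have h1 : (PowerSeries.X : PowerSeries K) ^ (n + 1) ∣
        aeval (fun j => PowerSeries.mk fun n => PowerSeries.coeff n (zs n j)) (Φ i)
          - aeval (zs n) (Φ i) := by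
      refine MvPolynomial.dvd_aeval_sub_aeval (fun j => ?_) _
      rw [PowerSeries.X_pow_dvd_iff]
      intro m hm
      obtain ⟨k, rfl⟩ := Nat.exists_eq_add_of_le (Nat.lt_succ_iff.mp hm)
      rw [map_sub, PowerSeries.coeff_mk, hstab, sub_self]
    have h2 := dvd_add h1 (happrox n i)
    rw [sub_add_sub_cancel] at h2
    rw [map_zero]
    exact PowerSeries.X_pow_dvd_iff.mp h2 n n.lt_succ_self

/-- Over an algebraically closed field, a polynomial system with a solution in some domain has a
solution in the field itself. -/
theorem MvPolynomial.exists_eval_eq_zero_of_aeval {K R σ τ κ : Type*} [Field K] [IsAlgClosed K]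
    [CommRing R] [IsDomain R] [Algebra K R] [Finite σ] [Fintype κ] (f : τ → MvPolynomial σ K)
    (g : κ → MvPolynomial σ K) (z : σ → R) (hf : ∀ i, aeval z (f i) = 0)
    (hg : ∀ k, aeval z (g k) ≠ 0) :
    ∃ x : σ → K, (∀ i, eval x (f i) = 0) ∧ ∀ k, eval x (g k) ≠ 0 := by
  by_contra! hcon
  have hmem : (∏ k, g k) ∈ (Ideal.span (Set.range f)).radical := by
    rw [← vanishingIdeal_zeroLocus_eq_radical (K := K), mem_vanishingIdeal_iff]
    intro x hx
    obtain ⟨k, hk⟩ := hcon x fun i => by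
      simpa [aeval_eq_eval] using hx (f i) (Ideal.subset_span ⟨i, rfl⟩)
    rw [map_prod]
    exact Finset.prod_eq_zero (Finset.mem_univ k) (by simpa [aeval_eq_eval] using hk)
  obtain ⟨n, hn⟩ := hmem
  have hle : Ideal.span (Set.range f) ≤ RingHom.ker (aeval (R := K) z) := by
    rw [Ideal.span_le]
    rintro _ ⟨i, rfl⟩
    exact hf i
  have h0 := hle hn
  rw [RingHom.mem_ker, map_pow, map_prod] at h0
  exact Finset.prod_ne_zero_iff.mpr (fun k _ => hg k) (eq_zero_of_pow_eq_zero h0)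

/-- If the differential of a polynomial system at a solution is surjective, then a nearby point
solves exactly the equations selected by `s`, while finitely many open conditions persist. -/
theorem MvPolynomial.exists_partial_smoothing {K σ τ κ : Type*} [Field K] [IsAlgClosed K]
    [Finite σ] [Fintype τ] [Fintype κ] (Φ : τ → MvPolynomial σ K) (z₀ : σ → K)
    (hz₀ : ∀ i, eval z₀ (Φ i) = 0)
    (hsurj : ∀ w : τ → K, ∃ h : σ → K, ∀ i,
      eval z₀ (mkDerivation K (fun j => C (h j)) (Φ i)) = w i)
    (s : Set τ) (g : κ → MvPolynomial σ K) (hg : ∀ k, eval z₀ (g k) ≠ 0) :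
    ∃ x : σ → K, (∀ i, eval x (Φ i) = 0 ↔ i ∈ s) ∧ ∀ k, eval x (g k) ≠ 0 := by
  classical
  obtain ⟨z, hz, hzΦ⟩ := MvPolynomial.exists_aeval_powerSeries_eq Φ z₀ hsurj
    (fun i => if i ∈ s then 0 else 1)
  obtain ⟨x, hx, hxg⟩ := exists_eval_eq_zero_of_aeval (fun i : s => Φ i)
    (Sum.elim (fun i : (sᶜ : Set τ) => Φ i) g) z
    (fun i => by rw [hzΦ, hz₀, if_pos i.2]; simp) (by
      rintro (i | k)
      · simp only [Sum.elim_inl]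
        rw [hzΦ, hz₀, if_neg i.2]
        simp [PowerSeries.X_ne_zero]
      · intro h0
        apply hg k
        rw [← MvPolynomial.constantCoeff_aeval_powerSeries hz]
        simp only [Sum.elim_inr] at h0
        rw [h0, map_zero])
  exact ⟨x, fun i => ⟨fun h => by_contra fun hi => hxg (Sum.inl ⟨i, hi⟩) h, fun hi => hx ⟨i, hi⟩⟩,
    fun k => hxg (Sum.inr k)⟩

theorem MvPolynomial.derivation_aeval {K R σ : Type*} [CommRing K] [CommRing R] [Algebra K R]
    [Fintype σ] (D : Derivation K R R) (x : σ → R) (f : MvPolynomial σ K) :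
    D (aeval x f) = ∑ k, aeval x (pderiv k f) * D (x k) := by
  classical
  induction f using MvPolynomial.induction_on with
  | C a => simp
  | add f g hf hg => simp [hf, hg, add_mul, Finset.sum_add_distrib]
  | mul_X f j hf =>
    have : ∑ k, aeval x (f * pderiv k (X j)) * D (x k) = aeval x f * D (x j) := by
      rw [Finset.sum_eq_single j]
      · simp
      · intro k _ hk
        simp [pderiv_X, hk.symm]
      · simp
    simp only [map_mul, aeval_X, Derivation.leibniz, smul_eq_mul, hf, map_add, add_mul,
      Finset.sum_add_distrib]
    simp only [map_mul] at this
    rw [this, Finset.mul_sum]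
    congr 1
    exact Finset.sum_congr rfl fun k _ => by ring

theorem MvPolynomial.pderiv_comm {K σ : Type*} [CommRing K] (i j : σ) (f : MvPolynomial σ K) :
    pderiv i (pderiv j f) = pderiv j (pderiv i f) := by
  classical
  have h : ⁅(pderiv i : Derivation K (MvPolynomial σ K) (MvPolynomial σ K)),
      (pderiv j : Derivation K (MvPolynomial σ K) (MvPolynomial σ K))⁆ = 0 := by
    apply derivation_ext
    intro k
    rw [Derivation.commutator_apply]
    simp only [pderiv_X, Pi.single_apply]
    split_ifs <;> simp
  simpa [Derivation.commutator_apply, sub_eq_zero] using DFunLike.congr_fun h f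

theorem MvPolynomial.eval_aeval_X {K σ τ : Type*} [CommRing K] (z : τ → K) (s : σ → τ)
    (f : MvPolynomial σ K) :
    eval z (aeval (fun k => (X (s k) : MvPolynomial τ K)) f) = eval (fun k => z (s k)) f := by
  induction f using MvPolynomial.induction_on with
  | C a => simp
  | add f g hf hg => simp only [map_add, hf, hg]
  | mul_X f j hf => simp only [map_mul, hf, aeval_X, eval_X]

section Deformation

variable {K : Type} [Field K] {ι γ : Type} [Fintype γ]

/-- The value at the `i`-th generic point of the generic member of the linear system
`F + ∑ t_m H_m`; its coordinates are the parameters `t_m` and the coordinates of all points. -/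
noncomputable def genericValue (F : MvPolynomial (Fin 2) K) (H : γ → MvPolynomial (Fin 2) K)
    (i : ι) : MvPolynomial (γ ⊕ ι × Fin 2) K :=
  aeval (fun k => X (Sum.inr (i, k))) F +
    ∑ m, X (Sum.inl m) * aeval (fun k => X (Sum.inr (i, k))) (H m)

theorem eval_genericValue (F : MvPolynomial (Fin 2) K) (H : γ → MvPolynomial (Fin 2) K) (i : ι)
    (z : γ ⊕ ι × Fin 2 → K) :
    eval z (genericValue F H i) =
      eval (fun k => z (Sum.inr (i, k))) (F + ∑ m, C (z (Sum.inl m)) * H m) := by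
  simp only [genericValue, map_add, map_sum, map_mul, eval_aeval_X, eval_X, eval_C]

theorem eval_derivation_genericValue (F : MvPolynomial (Fin 2) K)
    (H : γ → MvPolynomial (Fin 2) K) (i : ι) (P : ι → Fin 2 → K) (h : γ ⊕ ι × Fin 2 → K) :
    eval (Sum.elim (0 : γ → K) fun t : ι × Fin 2 => P t.1 t.2)
        (mkDerivation K (fun j => C (h j)) (genericValue F H i)) =
      ∑ m, h (Sum.inl m) * eval (P i) (H m)
        + ∑ k, eval (P i) (pderiv k F) * h (Sum.inr (i, k)) := by
  have h' (G : MvPolynomial (Fin 2) K) :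
      eval (Sum.elim (0 : γ → K) fun t : ι × Fin 2 => P t.1 t.2)
        (aeval (fun k => X (Sum.inr (i, k))) G) = eval (P i) G := by
    rw [eval_aeval_X]
    rfl
  simp only [genericValue, map_add, map_sum, Derivation.leibniz, mkDerivation_X, smul_eq_mul,
    derivation_aeval, map_mul, h', eval_X, eval_C, Sum.elim_inl, Pi.zero_apply, zero_mul, zero_add]
  rw [add_comm]
  congr 1
  exact Finset.sum_congr rfl fun m _ => mul_comm _ _

/-- Partial smoothing of a plane curve with nondegenerate critical points: if the linear system
spanned by the `H m` realises all values at the critical points on the curve, any prescribed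
subset `T` of these points can be kept on the curve while all other critical points leave it. -/
theorem exists_nodal_deformation [IsAlgClosed K] [Fintype ι] (F : MvPolynomial (Fin 2) K)
    (H : γ → MvPolynomial (Fin 2) K) (P : ι → Fin 2 → K) (hP : Function.Injective P)
    (hcrit : ∀ i k, eval (P i) (pderiv k F) = 0) (hhess : ∀ i, eval (P i) (hessPoly K F) ≠ 0)
    (hsurj : ∀ w : ι → K, ∃ h : γ → K, ∀ i, eval (P i) F = 0 →
      ∑ m, h m * eval (P i) (H m) = w i)
    (T : Set ι) (hT : ∀ i ∈ T, eval (P i) F = 0) {l : ℕ} (e : Fin l → ι)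
    (u : Fin l → MvPolynomial (Fin 2) K)
    (hdet : (Matrix.of fun i k : Fin l => eval (P (e i)) (u k)).det ≠ 0) :
    ∃ (t : γ → K) (Q : ι → Fin 2 → K), Function.Injective Q ∧
      (∀ i k, eval (Q i) (pderiv k (F + ∑ m, C (t m) * H m)) = 0) ∧
      (∀ i, eval (Q i) (hessPoly K (F + ∑ m, C (t m) * H m)) ≠ 0) ∧
      (∀ i, eval (Q i) (F + ∑ m, C (t m) * H m) = 0 ↔ i ∈ T) ∧
      (Matrix.of fun i k : Fin l => eval (Q (e i)) (u k)).det ≠ 0 := by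
  classical
  have hder : ∀ (k : Fin 2) (F : MvPolynomial (Fin 2) K) (H : γ → MvPolynomial (Fin 2) K)
      (t : γ → K), pderiv k (F + ∑ m, C (t m) * H m) =
        pderiv k F + ∑ m, C (t m) * pderiv k (H m) := by
    intro k F H t
    simp [map_sum, Derivation.leibniz]
  set z₀ : γ ⊕ ι × Fin 2 → K := Sum.elim 0 fun t => P t.1 t.2 with hz₀
  have heval₀ : ∀ G (H : γ → MvPolynomial (Fin 2) K) i,
      eval z₀ (genericValue G H i) = eval (P i) G := by
    intro G H i
    rw [eval_genericValue]
    simp [hz₀]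
  have hsep : ∀ t : {t : ι × ι // t.1 ≠ t.2}, ∃ k, P t.1.1 k ≠ P t.1.2 k := fun t =>
    Function.ne_iff.mp (hP.ne t.2)
  choose sep hsep using hsep
  let Φ : {i // eval (P i) F = 0} ⊕ ι × Fin 2 → MvPolynomial (γ ⊕ ι × Fin 2) K :=
    Sum.elim (fun i => genericValue F H i.1)
      (fun t => genericValue (pderiv t.2 F) (fun m => pderiv t.2 (H m)) t.1)
  let second : Fin 2 → Fin 2 → ι → MvPolynomial (γ ⊕ ι × Fin 2) K := fun k k' i =>
    genericValue (pderiv k (pderiv k' F)) (fun m => pderiv k (pderiv k' (H m))) i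
  let g : {i // eval (P i) F ≠ 0} ⊕ {t : ι × ι // t.1 ≠ t.2} ⊕ ι ⊕ Unit →
      MvPolynomial (γ ⊕ ι × Fin 2) K :=
    Sum.elim (fun i => genericValue F H i.1) (Sum.elim
      (fun t => X (Sum.inr (t.1.1, sep t)) - X (Sum.inr (t.1.2, sep t))) (Sum.elim
      (fun i => second 0 0 i * second 1 1 i - second 0 1 i ^ 2)
      (fun _ => (Matrix.of fun i k => genericValue (γ := γ) (u k) 0 (e i)).det)))
  obtain ⟨z, hzΦ, hzg⟩ := exists_partial_smoothing Φ z₀ (by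
      rintro (i | ⟨i, k⟩)
      · simpa [Φ, heval₀] using i.2
      · simpa [Φ, heval₀] using hcrit i k) (by
      intro w
      obtain ⟨h, hh⟩ := hsurj fun i => if hi : eval (P i) F = 0 then w (Sum.inl ⟨i, hi⟩) else 0
      have hsolve : ∀ i, ∃ v : Fin 2 → K, ∀ k,
          ∑ k', eval (P i) (pderiv k' (pderiv k F)) * v k' =
            w (Sum.inr (i, k)) - ∑ m, h m * eval (P i) (pderiv k (H m)) := by
        intro i
        set r : Fin 2 → K := fun k =>
          w (Sum.inr (i, k)) - ∑ m, h m * eval (P i) (pderiv k (H m))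
        have hd := hhess i
        simp only [hessPoly, map_sub, map_mul, map_pow] at hd
        set A := eval (P i) (pderiv 0 (pderiv 0 F))
        set B := eval (P i) (pderiv 1 (pderiv 1 F))
        set E := eval (P i) (pderiv 0 (pderiv 1 F)) with hE
        have hE' : eval (P i) (pderiv 1 (pderiv 0 F)) = E := by rw [hE, pderiv_comm]
        refine ⟨![(B * r 0 - E * r 1) / (A * B - E ^ 2), (A * r 1 - E * r 0) / (A * B - E ^ 2)],
          fun k => ?_⟩
        change _ = r k
        fin_cases k
        · simp only [Fin.zero_eta, Fin.sum_univ_two, hE', Matrix.cons_val_zero,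
            Matrix.cons_val_one]
          change A * _ + E * _ = _
          linear_combination r 0 * mul_inv_cancel₀ hd
        · simp only [Fin.mk_one, Fin.sum_univ_two, Matrix.cons_val_zero,
            Matrix.cons_val_one]
          change E * _ + B * _ = _
          linear_combination r 1 * mul_inv_cancel₀ hd
      choose v hv using hsolve
      refine ⟨Sum.elim h fun t => v t.1 t.2, ?_⟩
      rintro (i | ⟨i, k⟩)
      · simp only [Φ, hz₀, Sum.elim_inl]
        rw [eval_derivation_genericValue]
        simp only [hcrit, zero_mul, Finset.sum_const_zero, add_zero, Sum.elim_inl]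
        rw [hh i.1 i.2, dif_pos i.2]
      · simp only [Φ, hz₀, Sum.elim_inr]
        rw [eval_derivation_genericValue]
        simp only [Sum.elim_inl, Sum.elim_inr, hv]
        ring)
    {t | ∀ i, t = Sum.inl i → i.1 ∈ T} g (by
      rintro (i | t | i | _)
      · simpa [g, heval₀] using i.2
      · simpa [g, hz₀, sub_eq_zero] using hsep t
      · simpa [g, second, heval₀, hessPoly] using hhess i
      · simp only [g, Sum.elim_inr, RingHom.map_det]
        convert hdet using 2
        ext i k
        simp [heval₀])
  refine ⟨fun m => z (Sum.inl m), fun i k => z (Sum.inr (i, k)), fun i j hij => ?_, fun i k => ?_,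
    fun i => ?_, fun i => ?_, ?_⟩
  · by_contra hne
    have := hzg (Sum.inr (Sum.inl ⟨(i, j), hne⟩))
    simp only [g, Sum.elim_inr, Sum.elim_inl, map_sub, eval_X, sub_ne_zero] at this
    exact this (congrFun hij _)
  · have := (hzΦ (Sum.inr (i, k))).mpr (by simp)
    simp only [Φ, Sum.elim_inr, eval_genericValue] at this
    rw [hder, this]
  · have := hzg (Sum.inr (Sum.inr (Sum.inl i)))
    simpa only [g, second, Sum.elim_inr, Sum.elim_inl, map_sub, map_mul, map_pow,
      eval_genericValue, hessPoly, hder] using this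
  · by_cases hi : eval (P i) F = 0
    · have := hzΦ (Sum.inl ⟨i, hi⟩)
      simpa only [Φ, Sum.elim_inl, eval_genericValue, Set.mem_ofPred_eq, Sum.inl.injEq,
        forall_eq'] using this
    · have := hzg (Sum.inl ⟨i, hi⟩)
      simp only [g, Sum.elim_inl, eval_genericValue] at this
      exact ⟨fun h => absurd h this, fun h => absurd (hT i h) hi⟩
  · have := hzg (Sum.inr (Sum.inr (Sum.inr ())))
    simp only [g, Sum.elim_inr, RingHom.map_det] at this
    convert this using 2
    ext i k
    simp [eval_genericValue]

end Deformation

section CriticalPoints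

variable {K : Type} [Field K] {p q : ℕ}

theorem lt_of_mem_idxSet {t : ℕ × ℕ} (ht : t ∈ idxSet p q) : t.1 * p + t.2 * q < p * q :=
  (Finset.mem_filter.mp ht).2

theorem eval_pderiv_zero_wPoly (a : idxSet p q → K) (x : Fin 2 → K) :
    eval x (pderiv 0 (wPoly K p q a)) = -(q * x 0 ^ (q - 1)) +
      ∑ i : idxSet p q, a i * (i.1.1 : K) * (x 0 ^ (i.1.1 - 1) * x 1 ^ i.1.2) := by
  simp only [wPoly, map_add, map_sub, map_sum, Derivation.leibniz, Derivation.leibniz_pow,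
    pderiv_X_self, pderiv_X_of_ne (show (1 : Fin 2) ≠ 0 by decide), smul_zero, pderiv_C, map_mul,
    map_pow, eval_X, eval_C, smul_eq_mul, nsmul_eq_mul, map_natCast, mul_zero, mul_one, zero_add,
    add_zero, zero_sub, map_neg]
  congr 1
  exact Finset.sum_congr rfl fun i _ => by ring

theorem eval_pderiv_one_wPoly (a : idxSet p q → K) (x : Fin 2 → K) :
    eval x (pderiv 1 (wPoly K p q a)) = p * x 1 ^ (p - 1) +
      ∑ i : idxSet p q, a i * (i.1.2 : K) * (x 0 ^ i.1.1 * x 1 ^ (i.1.2 - 1)) := by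
  simp only [wPoly, map_add, map_sub, map_sum, Derivation.leibniz, Derivation.leibniz_pow,
    pderiv_X_self, pderiv_X_of_ne (show (0 : Fin 2) ≠ 1 by decide), smul_zero, pderiv_C, map_mul,
    map_pow, eval_X, eval_C, smul_eq_mul, nsmul_eq_mul, map_natCast, mul_zero, mul_one,
    add_zero, sub_zero]
  congr 1
  exact Finset.sum_congr rfl fun i _ => by ring

/-- A functional supported on critical points of `F_α` that kills the monomials `X^m Y^n` with
`m < q - 1`, `n < p - 1` kills all monomials. -/
theorem sum_mul_monomial_eq_zero [CharZero K] (hp : p ≠ 0) (hq : q ≠ 0) (a : idxSet p q → K)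
    {κ : Type} [Fintype κ] (x : κ → Fin 2 → K)
    (hx : ∀ z k, eval (x z) (pderiv k (wPoly K p q a)) = 0) (c : κ → K)
    (hc : ∀ m n, m < q - 1 → n < p - 1 → ∑ z, c z * (x z 0 ^ m * x z 1 ^ n) = 0) (m n : ℕ) :
    ∑ z, c z * (x z 0 ^ m * x z 1 ^ n) = 0 := by
  induction hw : m * p + n * q using Nat.strong_induction_on generalizing m n with
  | _ w ih =>
  by_cases hm : m < q - 1
  · by_cases hn : n < p - 1
    · exact hc m n hm hn
    · obtain ⟨n, rfl⟩ := Nat.exists_eq_add_of_le (not_lt.mp hn)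
      have hp' : (p : K) ≠ 0 := Nat.cast_ne_zero.mpr hp
      refine (mul_eq_zero.mp ?_).resolve_left hp'
      have h1 : ∀ z, (p : K) * (c z * (x z 0 ^ m * x z 1 ^ (p - 1 + n))) =
          - ∑ i : idxSet p q, a i * (i.1.2 : K) *
            (c z * (x z 0 ^ (m + i.1.1) * x z 1 ^ (n + (i.1.2 - 1)))) := by
        intro z
        have h := hx z 1
        rw [eval_pderiv_one_wPoly] at h
        rw [pow_add, ← sub_eq_zero, sub_neg_eq_add]
        have h2 := congrArg (fun s => c z * x z 0 ^ m * x z 1 ^ n * s) h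
        simp only [mul_add, Finset.mul_sum, mul_zero] at h2
        rw [← h2]
        congr 1
        · ring
        · exact Finset.sum_congr rfl fun i _ => by ring
      rw [Finset.mul_sum, Finset.sum_congr rfl fun z _ => h1 z, Finset.sum_neg_distrib,
        Finset.sum_comm, neg_eq_zero]
      refine Finset.sum_eq_zero fun i _ => ?_
      rw [← Finset.mul_sum]
      rcases Nat.eq_zero_or_pos i.1.2 with h0 | h0
      · simp [h0]
      · refine mul_eq_zero_of_right _ (ih _ ?_ _ _ rfl)
        have hi := lt_of_mem_idxSet i.2
        rw [← hw]
        obtain ⟨j, hj⟩ := Nat.exists_eq_add_of_le' h0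
        obtain ⟨p, rfl⟩ := Nat.exists_eq_add_of_le' (Nat.one_le_iff_ne_zero.mpr hp)
        simp only [hj, Nat.add_sub_cancel] at hi ⊢
        nlinarith
  · obtain ⟨m, rfl⟩ := Nat.exists_eq_add_of_le (not_lt.mp hm)
    have hq' : (q : K) ≠ 0 := Nat.cast_ne_zero.mpr hq
    refine (mul_eq_zero.mp ?_).resolve_left hq'
    have h1 : ∀ z, (q : K) * (c z * (x z 0 ^ (q - 1 + m) * x z 1 ^ n)) =
        ∑ i : idxSet p q, a i * (i.1.1 : K) *
          (c z * (x z 0 ^ (m + (i.1.1 - 1)) * x z 1 ^ (n + i.1.2))) := by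
      intro z
      have h := hx z 0
      rw [eval_pderiv_zero_wPoly] at h
      have h2 := congrArg (fun s => c z * x z 0 ^ m * x z 1 ^ n * s) h
      simp only [mul_add, Finset.mul_sum, mul_zero, mul_neg, neg_add_eq_zero] at h2
      rw [pow_add]
      convert h2 using 1
      · ring
      · exact Finset.sum_congr rfl fun i _ => by ring
    rw [Finset.mul_sum, Finset.sum_congr rfl fun z _ => h1 z, Finset.sum_comm]
    refine Finset.sum_eq_zero fun i _ => ?_
    rw [← Finset.mul_sum]
    rcases Nat.eq_zero_or_pos i.1.1 with h0 | h0
    · simp [h0]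
    · refine mul_eq_zero_of_right _ (ih _ ?_ _ _ rfl)
      have hi := lt_of_mem_idxSet i.2
      rw [← hw]
      obtain ⟨j, hj⟩ := Nat.exists_eq_add_of_le' h0
      obtain ⟨q, rfl⟩ := Nat.exists_eq_add_of_le' (Nat.one_le_iff_ne_zero.mpr hq)
      simp only [hj, Nat.add_sub_cancel] at hi ⊢
      nlinarith

/-- `F_α` has at most `(p - 1)(q - 1)` critical points. -/
theorem card_critical_points_le [CharZero K] (hp : p ≠ 0) (hq : q ≠ 0) (a : idxSet p q → K)
    {κ : Type} [Fintype κ] (x : κ → Fin 2 → K) (hinj : Function.Injective x)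
    (hx : ∀ z k, eval (x z) (pderiv k (wPoly K p q a)) = 0) :
    Fintype.card κ ≤ (p - 1) * (q - 1) := by
  let L : (κ → K) →ₗ[K] (Fin (q - 1) × Fin (p - 1) → K) :=
    LinearMap.pi fun t => ∑ z, (x z 0 ^ (t.1 : ℕ) * x z 1 ^ (t.2 : ℕ)) • LinearMap.proj z
  have hL : Function.Injective L := by
    rw [← LinearMap.ker_eq_bot, LinearMap.ker_eq_bot']
    intro c hc
    have hmon := sum_mul_monomial_eq_zero hp hq a x hx c fun m n hm hn => by
      have := congrFun hc (⟨m, hm⟩, ⟨n, hn⟩)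
      simp only [L, LinearMap.pi_apply, LinearMap.sum_apply, LinearMap.smul_apply,
        LinearMap.proj_apply, smul_eq_mul, Pi.zero_apply] at this
      rw [← this]
      exact Finset.sum_congr rfl fun z _ => mul_comm _ _
    have hind := (linearIndependent_monoidHom (MvPolynomial (Fin 2) K) K).comp
      (fun z => (eval (x z) : MvPolynomial (Fin 2) K →* K)) (fun z z' h => hinj (by
        funext k
        simpa using DFunLike.congr_fun h (X k)))
    rw [Fintype.linearIndependent_iff] at hind
    funext z
    refine hind c ?_ z
    funext f
    simp only [Function.comp_apply, Finset.sum_apply, Pi.smul_apply, smul_eq_mul, Pi.zero_apply]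
    change ∑ z, c z * eval (x z) f = 0
    induction f using MvPolynomial.induction_on' with
    | monomial s r =>
      have h2 := congrArg (fun t => r * t) (hmon (s 0) (s 1))
      simp only [Finset.mul_sum, mul_zero] at h2
      rw [← h2]
      refine Finset.sum_congr rfl fun z _ => ?_
      simp only [eval_monomial,
        Finsupp.prod_fintype _ _ (fun i => pow_zero _), Fin.prod_univ_two]
      ring
    | add f g hf hg => simp only [map_add, mul_add, Finset.sum_add_distrib, hf, hg, add_zero]
  have := LinearMap.finrank_le_finrank_of_injective hL
  simpa [mul_comm] using this

end CriticalPoints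

section Dickson

open Polynomial (dickson)

variable {K : Type} [Field K]

theorem dickson_one_one_eval_derivative (n : ℕ) {u v : K} (h : u * v = 1) :
    (dickson 1 (1 : K) n).derivative.eval (u + v) * (u - v) = n * (u ^ n - v ^ n) := by
  induction n using Nat.twoStepInduction with
  | zero => simp [Polynomial.dickson_zero]
  | one => simp
  | more n ih₀ ih₁ =>
    have hD := Polynomial.dickson_one_one_eval_add_inv u v h (n + 1)
    simp only [Polynomial.dickson_add_two, Polynomial.derivative_sub, Polynomial.derivative_mul,
      Polynomial.derivative_X, Polynomial.derivative_C, Polynomial.eval_sub, Polynomial.eval_add,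
      Polynomial.eval_mul, Polynomial.eval_X, Polynomial.eval_C, Polynomial.eval_one,
      Polynomial.eval_zero, hD]
    push_cast at ih₁ ⊢
    linear_combination (u + v) * ih₁ - ih₀ + (n * u ^ n - n * v ^ n) * h

theorem dickson_one_one_eval_derivative_derivative (n : ℕ) {u v : K} (h : u * v = 1) :
    (dickson 1 (1 : K) n).derivative.derivative.eval (u + v) * (u - v) ^ 2 +
      (dickson 1 (1 : K) n).derivative.eval (u + v) * (u + v) = n ^ 2 * (u ^ n + v ^ n) := by
  induction n using Nat.twoStepInduction with
  | zero => simp [Polynomial.dickson_zero]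
  | one => simp
  | more n ih₀ ih₁ =>
    have hD := Polynomial.dickson_one_one_eval_add_inv u v h (n + 1)
    have hD' := dickson_one_one_eval_derivative (n + 1) h
    simp only [Polynomial.dickson_add_two, Polynomial.derivative_sub, Polynomial.derivative_mul,
      Polynomial.derivative_X, Polynomial.derivative_C, Polynomial.eval_sub, Polynomial.eval_add,
      Polynomial.eval_mul, Polynomial.eval_X, Polynomial.eval_C, Polynomial.eval_one,
      Polynomial.derivative_add, Polynomial.derivative_one, Polynomial.derivative_zero,
      Polynomial.eval_zero, hD]
    push_cast at ih₁ hD' ⊢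
    linear_combination (u + v) * ih₁ - ih₀ + 2 * (u - v) * hD' + (n ^ 2 * (u ^ n + v ^ n)) * h

theorem degree_dickson_one_one_sub_X_pow (n : ℕ) :
    (dickson 1 (1 : K) (n + 1) - Polynomial.X ^ (n + 1)).degree < ((n + 1 : ℕ) : WithBot ℕ) ∧
      (dickson 1 (1 : K) n).degree < ((n + 1 : ℕ) : WithBot ℕ) := by
  induction n with
  | zero =>
    refine ⟨by simp, ?_⟩
    have h : dickson 1 (1 : K) 0 = Polynomial.C 2 := by
      rw [Polynomial.dickson_zero, map_ofNat]
      norm_num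
    rw [h]
    exact Polynomial.degree_C_le.trans_lt (by norm_num)
  | succ n ih =>
    constructor
    · have h : dickson 1 (1 : K) (n + 1 + 1) - Polynomial.X ^ (n + 1 + 1) =
          Polynomial.X * (dickson 1 (1 : K) (n + 1) - Polynomial.X ^ (n + 1)) - dickson 1 1 n := by
        rw [Polynomial.dickson_add_two, Polynomial.C_1]
        ring
      rw [h]
      refine (Polynomial.degree_sub_le _ _).trans_lt (max_lt ?_ (ih.2.trans (by norm_cast; omega)))
      rw [Polynomial.degree_lt_iff_coeff_zero]
      intro m hm
      obtain ⟨m, rfl⟩ := Nat.exists_eq_add_of_le' (show 1 ≤ m by omega)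
      rw [Polynomial.coeff_X_mul]
      exact Polynomial.degree_lt_iff_coeff_zero _ _ |>.mp ih.1 m (by omega)
    · have h : dickson 1 (1 : K) (n + 1) =
          (dickson 1 (1 : K) (n + 1) - Polynomial.X ^ (n + 1)) + Polynomial.X ^ (n + 1) := by ring
      rw [h]
      refine (Polynomial.degree_add_le _ _).trans_lt
        (max_lt (ih.1.trans (by norm_cast; omega)) ?_)
      rw [Polynomial.degree_X_pow]
      norm_cast
      omega

theorem degree_dickson_one_one_sub_X_pow_lt {n : ℕ} (hn : n ≠ 0) :
    (dickson 1 (1 : K) n - Polynomial.X ^ n).degree < (n : WithBot ℕ) := by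
  obtain ⟨n, rfl⟩ := Nat.exists_eq_succ_of_ne_zero hn
  exact (degree_dickson_one_one_sub_X_pow n).1

theorem monic_dickson_one_one {n : ℕ} (hn : n ≠ 0) : (dickson 1 (1 : K) n).Monic := by
  have h := Polynomial.monic_X_pow_add (degree_dickson_one_one_sub_X_pow_lt (K := K) hn)
  rwa [add_sub_cancel] at h

theorem natDegree_dickson_one_one {n : ℕ} (hn : n ≠ 0) : (dickson 1 (1 : K) n).natDegree = n := by
  have h := degree_dickson_one_one_sub_X_pow_lt (K := K) hn
  rw [← Polynomial.degree_X_pow (R := K) n] at h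
  apply Polynomial.natDegree_eq_of_degree_eq_some
  rw [← Polynomial.degree_X_pow (R := K) n, ← Polynomial.degree_add_eq_left_of_degree_lt h,
    add_sub_cancel]

/-- The value `ω^k + ω^{-k}`, i.e. twice a cosine when `ω` is a root of unity. -/
def twoCos (ω : K) (k : ℕ) : K := ω ^ k + (ω ^ k)⁻¹

variable {ω : K} {n : ℕ}

theorem dickson_eval_twoCos (hω : ω ≠ 0) (m k : ℕ) :
    (dickson 1 (1 : K) m).eval (twoCos ω k) = twoCos (ω ^ m) k := by
  rw [twoCos, Polynomial.dickson_one_one_eval_add_inv _ _ (mul_inv_cancel₀ (pow_ne_zero k hω)),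
    twoCos, inv_pow, ← pow_mul, ← pow_mul, mul_comm]

theorem IsPrimitiveRoot.pow_half_eq_neg_one (hn : n ≠ 0) (hω : IsPrimitiveRoot ω (2 * n)) :
    ω ^ n = -1 :=
  (hω.pow (by omega) (mul_comm _ _) : IsPrimitiveRoot (ω ^ n) 2).eq_neg_one_of_two_right

theorem dickson_eval_twoCos_of_isPrimitiveRoot (hn : n ≠ 0) (hω : IsPrimitiveRoot ω (2 * n))
    (k : ℕ) : (dickson 1 (1 : K) n).eval (twoCos ω k) = 2 * (-1) ^ k := by
  rw [dickson_eval_twoCos (hω.ne_zero (by omega)), twoCos, hω.pow_half_eq_neg_one hn, ← inv_pow,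
    inv_neg_one]
  ring

theorem pow_sub_inv_ne_zero (hn : n ≠ 0) (hω : IsPrimitiveRoot ω (2 * n)) {k : ℕ}
    (hk : ¬ n ∣ k) : ω ^ k - (ω ^ k)⁻¹ ≠ 0 := by
  intro h
  have h1 : ω ^ (2 * k) = 1 := by
    rw [sub_eq_zero] at h
    rw [mul_comm, pow_mul, pow_two]
    nth_rewrite 2 [h]
    exact mul_inv_cancel₀ (pow_ne_zero k (hω.ne_zero (by omega)))
  exact hk (Nat.dvd_of_mul_dvd_mul_left two_pos (hω.dvd_of_pow_eq_one _ h1))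

theorem dickson_derivative_eval_twoCos (hn : n ≠ 0) (hω : IsPrimitiveRoot ω (2 * n)) {k : ℕ}
    (hk : ¬ n ∣ k) : (dickson 1 (1 : K) n).derivative.eval (twoCos ω k) = 0 := by
  have hω0 : ω ≠ 0 := hω.ne_zero (by omega)
  refine (mul_eq_zero.mp ?_).resolve_right (pow_sub_inv_ne_zero hn hω hk)
  rw [twoCos, dickson_one_one_eval_derivative n (mul_inv_cancel₀ (pow_ne_zero k hω0)), inv_pow,
    ← pow_mul, mul_comm k, pow_mul, hω.pow_half_eq_neg_one hn, ← inv_pow, inv_neg_one, sub_self,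
    mul_zero]

theorem dickson_derivative_derivative_eval_twoCos_ne_zero [CharZero K] (hn : n ≠ 0)
    (hω : IsPrimitiveRoot ω (2 * n)) {k : ℕ} (hk : ¬ n ∣ k) :
    (dickson 1 (1 : K) n).derivative.derivative.eval (twoCos ω k) ≠ 0 := by
  have hω0 : ω ≠ 0 := hω.ne_zero (by omega)
  have huv := mul_inv_cancel₀ (pow_ne_zero k hω0)
  have h := dickson_one_one_eval_derivative_derivative n huv
  rw [← Polynomial.dickson_one_one_eval_add_inv _ _ huv] at h
  change _ * _ + (dickson 1 (1 : K) n).derivative.eval (twoCos ω k) * _ =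
    _ * (dickson 1 (1 : K) n).eval (twoCos ω k) at h
  rw [dickson_derivative_eval_twoCos hn hω hk, dickson_eval_twoCos_of_isPrimitiveRoot hn hω] at h
  intro h0
  rw [← twoCos, h0] at h
  simp [hn] at h

theorem eq_of_twoCos_eq (hω : IsPrimitiveRoot ω (2 * n)) {i j : ℕ} (hi : i < n) (hj : j < n)
    (h : twoCos ω i = twoCos ω j) : i = j := by
  have hω0 : ω ≠ 0 := hω.ne_zero (by omega)
  have hi0 := pow_ne_zero i hω0
  have hj0 := pow_ne_zero j hω0
  have h' : (ω ^ i - ω ^ j) * (ω ^ i * ω ^ j - 1) = 0 := by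
    simp only [twoCos] at h
    field_simp at h
    linear_combination h
  rcases mul_eq_zero.mp h' with h' | h'
  · exact hω.pow_inj (by omega) (by omega) (sub_eq_zero.mp h')
  · rw [sub_eq_zero, ← pow_add] at h'
    have := Nat.eq_zero_of_dvd_of_lt (hω.dvd_of_pow_eq_one _ h') (by omega)
    omega

theorem exists_twoCos_eq (hn : n ≠ 0) (hω : IsPrimitiveRoot ω (2 * n)) {k : ℕ} (hk : ¬ n ∣ k) :
    ∃ i, 0 < i ∧ i < n ∧ i % 2 = k % 2 ∧ twoCos ω k = twoCos ω i := by
  have hω0 : ω ≠ 0 := hω.ne_zero (by omega)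
  have hmod : ω ^ k = ω ^ (k % (2 * n)) := by
    conv_lhs => rw [← Nat.div_add_mod k (2 * n), pow_add, pow_mul, hω.pow_eq_one, one_pow, one_mul]
  have hlt : k % (2 * n) < 2 * n := Nat.mod_lt _ (by omega)
  have hpar : k % (2 * n) % 2 = k % 2 := Nat.mod_mul_right_mod k 2 n
  have hdvd : ¬ n ∣ k % (2 * n) := by
    rwa [Nat.dvd_mod_iff (dvd_mul_left n 2)]
  have h0 : k % (2 * n) ≠ 0 := fun h => hdvd (h ▸ dvd_zero n)
  have h1 : k % (2 * n) ≠ n := fun h => hdvd h.symm.dvd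
  rcases lt_or_gt_of_ne h1 with h | h
  · exact ⟨_, by omega, h, hpar, by simp only [twoCos, hmod]⟩
  · refine ⟨2 * n - k % (2 * n), by omega, by omega, by omega, ?_⟩
    have hinv : ω ^ (2 * n - k % (2 * n)) = (ω ^ k)⁻¹ := by
      rw [hmod, pow_sub₀ _ hω0 hlt.le, hω.pow_eq_one, one_mul]
    rw [twoCos, twoCos, hinv, inv_inv, add_comm]

end Dickson

section GapMonomials

open Polynomial (dickson)

variable {K : Type} [Field K] {p q : ℕ}

theorem gap_fst_lt {a b : ℕ} (h : a * p + b * q < (p - 1) * (q - 1)) : a < q - 1 := by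
  by_contra! ha
  have h1 : (p - 1) * (q - 1) ≤ a * p := by
    rw [mul_comm]
    exact Nat.mul_le_mul ha (Nat.sub_le p 1)
  omega

theorem gap_snd_lt {a b : ℕ} (h : a * p + b * q < (p - 1) * (q - 1)) : b < p - 1 := by
  rw [add_comm, mul_comm (p - 1)] at h
  exact gap_fst_lt h

theorem eq_of_mul_add_mul_eq (hco : p.Coprime q) {a b a' b' : ℕ} (ha : a < q) (ha' : a' < q)
    (h : a * p + b * q = a' * p + b' * q) : (a, b) = (a', b') := by
  have hmod : a * p ≡ a' * p [MOD q] := by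
    have h' : a * p + b * q ≡ a' * p + b' * q [MOD q] := by rw [h]
    simpa [Nat.ModEq] using h'
  have haa : a = a' :=
    (Nat.ModEq.cancel_right_of_coprime (Nat.gcd_comm q p ▸ hco) hmod).eq_of_lt_of_lt ha ha'
  subst haa
  have hb : b * q = b' * q := by omega
  rw [Nat.eq_of_mul_eq_mul_right (by omega) hb]

theorem sum_dickson_pow_mul_pow_eq_zero (hp : p ≠ 0) (hq : q ≠ 0) (hco : p.Coprime q)
    {s : Finset (ℕ × ℕ)} (hs : ∀ m ∈ s, m.1 < q) {c : ℕ × ℕ → K}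
    (h : ∑ m ∈ s, Polynomial.C (c m) * (dickson 1 1 p ^ m.1 * dickson 1 1 q ^ m.2) = 0) :
    ∀ m ∈ s, c m = 0 := by
  classical
  by_contra! hne
  obtain ⟨m₀, hm₀, hmax⟩ := Finset.exists_max_image (s.filter fun m => c m ≠ 0)
    (fun m => m.1 * p + m.2 * q) (by simpa [Finset.Nonempty] using hne)
  rw [Finset.mem_filter] at hm₀
  have hmonic (m : ℕ × ℕ) : (dickson 1 (1 : K) p ^ m.1 * dickson 1 1 q ^ m.2).Monic :=
    ((monic_dickson_one_one hp).pow _).mul ((monic_dickson_one_one hq).pow _)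
  have hdeg (m : ℕ × ℕ) : (dickson 1 (1 : K) p ^ m.1 * dickson 1 1 q ^ m.2).natDegree =
      m.1 * p + m.2 * q := by
    rw [((monic_dickson_one_one hp).pow _).natDegree_mul ((monic_dickson_one_one hq).pow _),
      (monic_dickson_one_one hp).natDegree_pow, (monic_dickson_one_one hq).natDegree_pow,
      natDegree_dickson_one_one hp, natDegree_dickson_one_one hq]
  have hcoeff := congrArg (fun f => f.coeff (m₀.1 * p + m₀.2 * q)) h
  simp only [Polynomial.finsetSum_coeff, Polynomial.coeff_C_mul, Polynomial.coeff_zero] at hcoeff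
  rw [Finset.sum_eq_single_of_mem m₀ hm₀.1, ← hdeg, (hmonic m₀).coeff_natDegree, mul_one] at hcoeff
  · exact hm₀.2 hcoeff
  · intro m hm hmm
    by_cases hc : c m = 0
    · rw [hc, zero_mul]
    · refine mul_eq_zero_of_right _ (Polynomial.coeff_eq_zero_of_natDegree_lt ?_)
      rw [hdeg]
      refine lt_of_le_of_ne (hmax m (Finset.mem_filter.mpr ⟨hm, hc⟩)) fun heq => hmm ?_
      exact eq_of_mul_add_mul_eq hco (hs m hm) (hs m₀ hm₀.1) heq

/-- Monomials indexed by gaps are linearly independent as functions on the nodes of the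
Chebyshev curve. -/
theorem gap_coefficients_eq_zero (hp : 1 < p) (hq : 1 < q) (hco : p.Coprime q) {ζ : K}
    (hζ : IsPrimitiveRoot ζ (2 * (p * q))) {s : Finset (ℕ × ℕ)}
    (hs : ∀ m ∈ s, m.1 * p + m.2 * q < (p - 1) * (q - 1)) {c : ℕ × ℕ → K}
    (h : ∀ i j, 0 < i → i < q → 0 < j → j < p → i % 2 = j % 2 →
      ∑ m ∈ s, c m * (twoCos (ζ ^ p) i ^ m.1 * twoCos (ζ ^ q) j ^ m.2) = 0) :
    ∀ m ∈ s, c m = 0 := by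
  have hp0 : p ≠ 0 := by omega
  have hq0 : q ≠ 0 := by omega
  have hpq0 : p * q ≠ 0 := mul_ne_zero hp0 hq0
  have hζp : IsPrimitiveRoot (ζ ^ p) (2 * q) := hζ.pow (by omega) (by ring)
  have hζq : IsPrimitiveRoot (ζ ^ q) (2 * p) := hζ.pow (by omega) (by ring)
  have hζ0 : ζ ≠ 0 := hζ.ne_zero (by omega)
  refine sum_dickson_pow_mul_pow_eq_zero hp0 hq0 hco
    (fun m hm => (gap_fst_lt (hs m hm)).trans_le (Nat.sub_le q 1)) ?_
  let k : Fin (p - 1) × Fin (q - 1) → ℕ := fun z =>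
    Nat.chineseRemainder hco (z.1 + 1) (z.2 + 1)
  have hkp (z) : k z ≡ z.1 + 1 [MOD p] := (Nat.chineseRemainder hco (z.1 + 1) (z.2 + 1)).2.1
  have hkq (z) : k z ≡ z.2 + 1 [MOD q] := (Nat.chineseRemainder hco (z.1 + 1) (z.2 + 1)).2.2
  have hklt (z) : k z < p * q := Nat.chineseRemainder_lt_mul hco _ _ hp0 hq0
  have hpk (z) : ¬ p ∣ k z := by
    rw [(hkp z).dvd_iff dvd_rfl]
    exact Nat.not_dvd_of_pos_of_lt (by omega) (by omega)
  have hqk (z) : ¬ q ∣ k z := by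
    rw [(hkq z).dvd_iff dvd_rfl]
    exact Nat.not_dvd_of_pos_of_lt (by omega) (by omega)
  refine Polynomial.eq_zero_of_natDegree_lt_card_of_eval_eq_zero _
    (f := fun z => twoCos ζ (k z)) ?_ ?_ ?_
  · intro z z' hzz
    have hk : k z = k z' := eq_of_twoCos_eq hζ (hklt z) (hklt z') hzz
    have h1 := (hkp z).symm.trans (hk ▸ hkp z')
    have h2 := (hkq z).symm.trans (hk ▸ hkq z')
    have h1' := h1.eq_of_lt_of_lt (by omega) (by omega)
    have h2' := h2.eq_of_lt_of_lt (by omega) (by omega)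
    exact Prod.ext (Fin.ext (by omega)) (Fin.ext (by omega))
  · intro z
    obtain ⟨i, hi0, hi, hik, hti⟩ := exists_twoCos_eq hq0 hζp (hqk z)
    obtain ⟨j, hj0, hj, hjk, htj⟩ := exists_twoCos_eq hp0 hζq (hpk z)
    rw [← h i j hi0 hi hj0 hj (hik.trans hjk.symm), Polynomial.eval_finsetSum]
    simp only [Polynomial.eval_mul, Polynomial.eval_pow, Polynomial.eval_C,
      dickson_eval_twoCos hζ0, hti, htj]
  · rw [Fintype.card_prod, Fintype.card_fin, Fintype.card_fin]
    have hpos : 0 < (p - 1) * (q - 1) := Nat.mul_pos (by omega) (by omega)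
    refine (Polynomial.natDegree_sum_le_of_forall_le (n := (p - 1) * (q - 1) - 1) _ _ ?_).trans_lt
      (by omega)
    intro m hm
    refine (Polynomial.natDegree_C_mul_le _ _).trans (Polynomial.natDegree_mul_le.trans ?_)
    have h1 := Polynomial.natDegree_pow_le (p := dickson 1 (1 : K) p) (n := m.1)
    have h2 := Polynomial.natDegree_pow_le (p := dickson 1 (1 : K) q) (n := m.2)
    rw [natDegree_dickson_one_one hp0] at h1
    rw [natDegree_dickson_one_one hq0] at h2
    have := hs m hm
    omega

end GapMonomials

section Counting

/-- The pairs `(a,b)` with `ap + bq < (p-1)(q-1)`. -/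
def gapSet (p q : ℕ) : Finset (ℕ × ℕ) :=
  (Finset.range (q - 1) ×ˢ Finset.range (p - 1)).filter fun t =>
    t.1 * p + t.2 * q < (p - 1) * (q - 1)

variable {p q : ℕ}

theorem mem_gapSet {t : ℕ × ℕ} : t ∈ gapSet p q ↔ t.1 * p + t.2 * q < (p - 1) * (q - 1) := by
  simp only [gapSet, Finset.mem_filter, Finset.mem_product, Finset.mem_range, and_iff_right_iff_imp]
  exact fun h => ⟨gap_fst_lt h, gap_snd_lt h⟩

theorem le_two_mul_card_gapSet (p q : ℕ) : (p - 1) * (q - 1) ≤ 2 * (gapSet p q).card := by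
  have hcard := Finset.card_filter_add_card_filter_not
    (s := Finset.range (q - 1) ×ˢ Finset.range (p - 1))
    (fun t => t.1 * p + t.2 * q < (p - 1) * (q - 1))
  have hle : ((Finset.range (q - 1) ×ˢ Finset.range (p - 1)).filter fun t =>
      ¬ t.1 * p + t.2 * q < (p - 1) * (q - 1)).card ≤ (gapSet p q).card := by
    refine Finset.card_le_card_of_injOn (fun t => (q - 2 - t.1, p - 2 - t.2)) ?_ ?_
    · rintro ⟨a, b⟩ h
      simp only [Finset.coe_filter, Finset.mem_product, Finset.mem_range, Set.mem_ofPred_eq] at h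
      obtain ⟨⟨ha, hb⟩, hw⟩ := h
      rw [SetLike.mem_coe, mem_gapSet]
      obtain ⟨a', rfl⟩ : ∃ a', q = a + a' + 2 := ⟨q - 2 - a, by omega⟩
      obtain ⟨b', rfl⟩ : ∃ b', p = b + b' + 2 := ⟨p - 2 - b, by omega⟩
      simp only [show a + a' + 2 - 2 - a = a' by omega, show b + b' + 2 - 2 - b = b' by omega,
        show a + a' + 2 - 1 = a + a' + 1 by omega, show b + b' + 2 - 1 = b + b' + 1 by omega]
        at hw ⊢
      nlinarith
    · rintro ⟨a, b⟩ h ⟨a', b'⟩ h' heq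
      simp only [Finset.coe_filter, Finset.mem_product, Finset.mem_range, Set.mem_ofPred_eq]
        at h h'
      simp only [Prod.mk.injEq] at heq ⊢
      omega
  rw [Finset.card_product, Finset.card_range, Finset.card_range, mul_comm (q - 1)] at hcard
  unfold gapSet at hle ⊢
  omega

theorem two_mul_card_parity_le (hp : 1 < p) (hq : 1 < q) (hco : p.Coprime q) :
    2 * Fintype.card {z : Fin (q - 1) × Fin (p - 1) // (z.1 : ℕ) % 2 = z.2 % 2} ≤
      (p - 1) * (q - 1) := by
  have hcard := Fintype.card_subtype_compl
    (fun z : Fin (q - 1) × Fin (p - 1) => (z.1 : ℕ) % 2 = z.2 % 2)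
  have hle := Fintype.card_subtype_le
    (fun z : Fin (q - 1) × Fin (p - 1) => (z.1 : ℕ) % 2 = z.2 % 2)
  rw [Fintype.card_prod, Fintype.card_fin, Fintype.card_fin, mul_comm (q - 1)] at hcard hle
  suffices h : Fintype.card {z : Fin (q - 1) × Fin (p - 1) // (z.1 : ℕ) % 2 = z.2 % 2} ≤
      Fintype.card {z : Fin (q - 1) × Fin (p - 1) // ¬ (z.1 : ℕ) % 2 = z.2 % 2} by omega
  have hodd : p % 2 = 1 ∨ q % 2 = 1 := by
    by_contra! h
    have := Nat.dvd_gcd (show 2 ∣ p by omega) (show 2 ∣ q by omega)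
    rw [hco] at this
    omega
  rcases hodd with hodd | hodd
  · refine Fintype.card_le_of_injective
      (fun z => ⟨(z.1.1, Fin.rev z.1.2), ?_⟩) ?_
    · have := z.2
      have := z.1.2.2
      simp only [Fin.val_rev]
      omega
    · intro z z' h
      simpa [Subtype.ext_iff, Prod.ext_iff] using h
  · refine Fintype.card_le_of_injective
      (fun z => ⟨(Fin.rev z.1.1, z.1.2), ?_⟩) ?_
    · have := z.2
      have := z.1.1.2
      simp only [Fin.val_rev]
      omega
    · intro z z' h
      simpa [Subtype.ext_iff, Prod.ext_iff] using h

end Counting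

theorem LinearIndependent.exists_det_ne_zero {K N : Type} [Field K] [Fintype N] {l : ℕ}
    {M : Fin l → N → K} (hM : LinearIndependent K M) :
    ∃ e : Fin l → N, (Matrix.of fun i k => M k (e i)).det ≠ 0 := by
  have hrank : Module.finrank K (Submodule.span K (Set.range fun x k => M k x)) = l := by
    have h := LinearIndependent.rank_matrix (M := Matrix.of M) hM
    rw [Matrix.rank_eq_finrank_span_cols, Fintype.card_fin] at h
    exact h
  obtain ⟨κ, e, he, hspan, hli⟩ := exists_linearIndependent' K fun x k => M k x
  have : Fintype κ := Fintype.ofInjective e he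
  have hκ : Fintype.card κ = l := by
    rw [← hrank, ← hspan, finrank_span_eq_card hli]
  let σ : Fin l ≃ κ := (Fintype.equivFinOfCardEq hκ).symm
  refine ⟨e ∘ σ, ?_⟩
  have hrows := (linearIndependent_equiv σ).mpr hli
  rw [← isUnit_iff_ne_zero, ← Matrix.isUnit_iff_isUnit_det,
    ← Matrix.linearIndependent_rows_iff_isUnit]
  exact hrows

section ChebyshevCurve

open Polynomial (dickson)

variable {K : Type} [Field K] {p q : ℕ}

theorem eval_polynomial_aeval_X (x : Fin 2 → K) (k : Fin 2) (f : Polynomial K) :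
    eval x (Polynomial.aeval (X k : MvPolynomial (Fin 2) K) f) = f.eval (x k) := by
  have h := Polynomial.aeval_algHom_apply (aeval x : MvPolynomial (Fin 2) K →ₐ[K] K) (X k) f
  rw [aeval_X, Polynomial.coe_aeval_eq_eval] at h
  rw [h, aeval_eq_eval]

theorem pderiv_polynomial_aeval_X_self (k : Fin 2) (f : Polynomial K) :
    pderiv k (Polynomial.aeval (X k : MvPolynomial (Fin 2) K) f) =
      Polynomial.aeval (X k) f.derivative := by
  rw [Derivation.map_aeval, pderiv_X_self, smul_eq_mul, mul_one]

theorem pderiv_polynomial_aeval_X_of_ne {j k : Fin 2} (h : j ≠ k) (f : Polynomial K) :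
    pderiv k (Polynomial.aeval (X j : MvPolynomial (Fin 2) K) f) = 0 := by
  rw [Derivation.map_aeval, pderiv_X_of_ne h, smul_zero]

variable (K p q) in
/-- The Chebyshev curve `D_p(Y) = D_q(X)`, with `D_n` the Dickson polynomials. -/
noncomputable def chebyshevCurve : MvPolynomial (Fin 2) K :=
  Polynomial.aeval (X 1) (dickson 1 (1 : K) p) - Polynomial.aeval (X 0) (dickson 1 (1 : K) q)

theorem pderiv_zero_chebyshevCurve :
    pderiv 0 (chebyshevCurve K p q) =
      -Polynomial.aeval (X 0) (dickson 1 (1 : K) q).derivative := by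
  rw [chebyshevCurve, map_sub, pderiv_polynomial_aeval_X_self,
    pderiv_polynomial_aeval_X_of_ne (by decide), zero_sub]

theorem pderiv_one_chebyshevCurve :
    pderiv 1 (chebyshevCurve K p q) =
      Polynomial.aeval (X 1) (dickson 1 (1 : K) p).derivative := by
  rw [chebyshevCurve, map_sub, pderiv_polynomial_aeval_X_self,
    pderiv_polynomial_aeval_X_of_ne (by decide), sub_zero]

theorem eval_hessPoly_chebyshevCurve (x : Fin 2 → K) :
    eval x (hessPoly K (chebyshevCurve K p q)) =
      -((dickson 1 (1 : K) q).derivative.derivative.eval (x 0) *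
        (dickson 1 (1 : K) p).derivative.derivative.eval (x 1)) := by
  rw [hessPoly, pderiv_zero_chebyshevCurve, pderiv_one_chebyshevCurve, map_neg,
    pderiv_polynomial_aeval_X_self, pderiv_polynomial_aeval_X_self,
    pderiv_polynomial_aeval_X_of_ne (by decide)]
  simp only [map_sub, map_mul, map_neg, map_pow, map_zero, eval_polynomial_aeval_X]
  ring

theorem monomial_mem_span_idxSet {a b : ℕ} (h : a * p + b * q < p * q) :
    (X 0 ^ a * X 1 ^ b : MvPolynomial (Fin 2) K) ∈ Submodule.span K
      (Set.range fun i : idxSet p q => (X 0 ^ i.1.1 * X 1 ^ i.1.2 : MvPolynomial (Fin 2) K)) := by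
  have ha : a < q := lt_of_mul_lt_mul_left (a := p) (by rw [mul_comm p a]; omega) (Nat.zero_le p)
  have hb : b < p := lt_of_mul_lt_mul_right (a := q) (by omega) (Nat.zero_le q)
  refine Submodule.subset_span ⟨⟨(a, b), ?_⟩, rfl⟩
  simpa [idxSet] using ⟨⟨ha, hb⟩, h⟩

theorem polynomial_aeval_X_mem {S : Submodule K (MvPolynomial (Fin 2) K)} {k : Fin 2} {n : ℕ}
    (hS : ∀ i < n, X k ^ i ∈ S) {f : Polynomial K} (hf : f.degree < (n : WithBot ℕ)) :
    Polynomial.aeval (X k : MvPolynomial (Fin 2) K) f ∈ S := by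
  by_cases hf0 : f = 0
  · rw [hf0, map_zero]
    exact S.zero_mem
  · rw [Polynomial.aeval_eq_sum_range' ((Polynomial.natDegree_lt_iff_degree_lt hf0).mpr hf)]
    exact S.sum_mem fun i hi => S.smul_mem _ (hS i (Finset.mem_range.mp hi))

theorem exists_wPoly_eq (hp : p ≠ 0) (hq : q ≠ 0) (t : gapSet p q → K) :
    ∃ a, chebyshevCurve K p q + ∑ m, C (t m) * (X 0 ^ m.1.1 * X 1 ^ m.1.2) = wPoly K p q a := by
  set S := Submodule.span K
    (Set.range fun i : idxSet p q => (X 0 ^ i.1.1 * X 1 ^ i.1.2 : MvPolynomial (Fin 2) K)) with hS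
  have hY : Polynomial.aeval (X 1) (dickson 1 (1 : K) p - Polynomial.X ^ p) ∈ S := by
    refine polynomial_aeval_X_mem (fun i hi => ?_) (degree_dickson_one_one_sub_X_pow_lt hp)
    have h : 0 * p + i * q < p * q := by
      rw [zero_mul, zero_add]
      exact Nat.mul_lt_mul_of_pos_right hi (by omega)
    simpa using monomial_mem_span_idxSet (K := K) h
  have hX : Polynomial.aeval (X 0) (dickson 1 (1 : K) q - Polynomial.X ^ q) ∈ S := by
    refine polynomial_aeval_X_mem (fun i hi => ?_) (degree_dickson_one_one_sub_X_pow_lt hq)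
    have h : i * p + 0 * q < p * q := by
      rw [zero_mul, add_zero, mul_comm]
      exact Nat.mul_lt_mul_of_pos_left hi (by omega)
    simpa using monomial_mem_span_idxSet (K := K) h
  have hG : ∑ m : gapSet p q, C (t m) * (X 0 ^ m.1.1 * X 1 ^ m.1.2) ∈ S := by
    refine S.sum_mem fun m _ => ?_
    rw [← smul_eq_C_mul]
    refine S.smul_mem _ (monomial_mem_span_idxSet ((mem_gapSet.mp m.2).trans_le ?_))
    exact Nat.mul_le_mul (Nat.sub_le p 1) (Nat.sub_le q 1)
  obtain ⟨a, ha⟩ := (Submodule.mem_span_range_iff_exists_fun K).mp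
    (S.add_mem (S.sub_mem hY hX) hG)
  refine ⟨a, ?_⟩
  simp only [map_sub, map_pow, Polynomial.aeval_X, smul_eq_C_mul] at ha
  simp only [wPoly, mul_assoc, ha, chebyshevCurve]
  ring

/-- The critical points of the Chebyshev curve. -/
def chebyshevPoint (ζ : K) (p q : ℕ) (z : Fin (q - 1) × Fin (p - 1)) : Fin 2 → K :=
  ![twoCos (ζ ^ p) (z.1 + 1), twoCos (ζ ^ q) (z.2 + 1)]

variable {ζ : K}

theorem isPrimitiveRoot_pow_left (hp : 1 < p) (hq : 1 < q)
    (hζ : IsPrimitiveRoot ζ (2 * (p * q))) : IsPrimitiveRoot (ζ ^ p) (2 * q) :=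
  hζ.pow (by positivity) (by ring)

theorem isPrimitiveRoot_pow_right (hp : 1 < p) (hq : 1 < q)
    (hζ : IsPrimitiveRoot ζ (2 * (p * q))) : IsPrimitiveRoot (ζ ^ q) (2 * p) :=
  hζ.pow (by positivity) (by ring)

theorem not_dvd_fin_succ {n : ℕ} (i : Fin (n - 1)) : ¬ n ∣ (i : ℕ) + 1 :=
  Nat.not_dvd_of_pos_of_lt (by omega) (by omega)

theorem chebyshevPoint_injective (hp : 1 < p) (hq : 1 < q)
    (hζ : IsPrimitiveRoot ζ (2 * (p * q))) :
    Function.Injective (chebyshevPoint ζ p q) := by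
  intro z z' h
  have h0 := eq_of_twoCos_eq (isPrimitiveRoot_pow_left hp hq hζ) (by omega) (by omega)
    (congrFun h 0)
  have h1 := eq_of_twoCos_eq (isPrimitiveRoot_pow_right hp hq hζ) (by omega) (by omega)
    (congrFun h 1)
  exact Prod.ext (Fin.ext (by omega)) (Fin.ext (by omega))

theorem eval_pderiv_chebyshevPoint (hp : 1 < p) (hq : 1 < q)
    (hζ : IsPrimitiveRoot ζ (2 * (p * q))) (z : Fin (q - 1) × Fin (p - 1)) (k : Fin 2) :
    eval (chebyshevPoint ζ p q z) (pderiv k (chebyshevCurve K p q)) = 0 := by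
  fin_cases k
  · simpa [pderiv_zero_chebyshevCurve, eval_polynomial_aeval_X] using!
      dickson_derivative_eval_twoCos (by omega) (isPrimitiveRoot_pow_left hp hq hζ)
        (not_dvd_fin_succ z.1)
  · simpa [pderiv_one_chebyshevCurve, eval_polynomial_aeval_X] using!
      dickson_derivative_eval_twoCos (by omega) (isPrimitiveRoot_pow_right hp hq hζ)
        (not_dvd_fin_succ z.2)

theorem eval_hessPoly_chebyshevPoint_ne_zero [CharZero K] (hp : 1 < p) (hq : 1 < q)
    (hζ : IsPrimitiveRoot ζ (2 * (p * q)))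
    (z : Fin (q - 1) × Fin (p - 1)) :
    eval (chebyshevPoint ζ p q z) (hessPoly K (chebyshevCurve K p q)) ≠ 0 := by
  rw [eval_hessPoly_chebyshevCurve]
  exact neg_ne_zero.mpr (mul_ne_zero
    (dickson_derivative_derivative_eval_twoCos_ne_zero (by omega)
      (isPrimitiveRoot_pow_left hp hq hζ) (not_dvd_fin_succ z.1))
    (dickson_derivative_derivative_eval_twoCos_ne_zero (by omega)
      (isPrimitiveRoot_pow_right hp hq hζ) (not_dvd_fin_succ z.2)))

theorem eval_chebyshevCurve_chebyshevPoint_eq_zero_iff [CharZero K] (hp : 1 < p) (hq : 1 < q)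
    (hζ : IsPrimitiveRoot ζ (2 * (p * q)))
    (z : Fin (q - 1) × Fin (p - 1)) :
    eval (chebyshevPoint ζ p q z) (chebyshevCurve K p q) = 0 ↔ (z.1 : ℕ) % 2 = z.2 % 2 := by
  have hx := dickson_eval_twoCos_of_isPrimitiveRoot (by omega)
    (isPrimitiveRoot_pow_left hp hq hζ) (z.1 + 1)
  have hy := dickson_eval_twoCos_of_isPrimitiveRoot (by omega)
    (isPrimitiveRoot_pow_right hp hq hζ) (z.2 + 1)
  have h : eval (chebyshevPoint ζ p q z) (chebyshevCurve K p q) =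
      2 * (-1) ^ ((z.2 : ℕ) + 1) - 2 * (-1) ^ ((z.1 : ℕ) + 1) := by
    rw [chebyshevCurve, map_sub, eval_polynomial_aeval_X, eval_polynomial_aeval_X, ← hx, ← hy]
    rfl
  rw [h, ← mul_sub, mul_eq_zero, or_iff_right two_ne_zero, sub_eq_zero, pow_succ, pow_succ,
    mul_left_inj' (by norm_num)]
  rcases Nat.even_or_odd (z.1 : ℕ) with h1 | h1 <;> rcases Nat.even_or_odd (z.2 : ℕ) with h2 | h2 <;>
    simp only [h1.neg_one_pow, h2.neg_one_pow] <;>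
    simp only [Nat.even_iff, Nat.odd_iff] at h1 h2 <;> rw [h1, h2] <;> norm_num

end ChebyshevCurve

theorem chebyshevNode_interpolation {K : Type} [Field K] {p q : ℕ} {ζ : K} (hp : 1 < p)
    (hq : 1 < q) (hco : p.Coprime q) (hζ : IsPrimitiveRoot ζ (2 * (p * q))) :
    Function.Bijective (Fintype.linearCombination K
      fun (m : gapSet p q) (z : {z : Fin (q - 1) × Fin (p - 1) // (z.1 : ℕ) % 2 = z.2 % 2}) =>
        chebyshevPoint ζ p q z 0 ^ m.1.1 * chebyshevPoint ζ p q z 1 ^ m.1.2) := by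
  set L := Fintype.linearCombination K
    fun (m : gapSet p q) (z : {z : Fin (q - 1) × Fin (p - 1) // (z.1 : ℕ) % 2 = z.2 % 2}) =>
      chebyshevPoint ζ p q z 0 ^ m.1.1 * chebyshevPoint ζ p q z 1 ^ m.1.2 with hL
  have hinj : Function.Injective L := by
    rw [injective_iff_map_eq_zero]
    intro c hc
    have hzero := gap_coefficients_eq_zero hp hq hco hζ (s := gapSet p q)
      (c := fun m => if hm : m ∈ gapSet p q then c ⟨m, hm⟩ else 0)
      (fun m hm => mem_gapSet.mp hm) ?_
    · ext m
      simpa using hzero m.1 m.2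
    · intro i j hi0 hi hj0 hj hij
      have h := congrFun hc ⟨(⟨i - 1, by omega⟩, ⟨j - 1, by omega⟩), by simp only; omega⟩
      rw [← Finset.sum_coe_sort]
      simpa [hL, Fintype.linearCombination_apply, chebyshevPoint, Nat.sub_add_cancel hi0,
        Nat.sub_add_cancel hj0] using h
  have hle := LinearMap.finrank_le_finrank_of_injective hinj
  rw [Module.finrank_fintype_fun_eq_card, Module.finrank_fintype_fun_eq_card] at hle
  refine ⟨hinj, (LinearMap.injective_iff_surjective_of_finrank_eq_finrank ?_).mp hinj⟩
  rw [Module.finrank_fintype_fun_eq_card, Module.finrank_fintype_fun_eq_card]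
  have h1 := le_two_mul_card_gapSet p q
  have h2 := two_mul_card_parity_le hp hq hco
  rw [Fintype.card_coe] at hle ⊢
  omega

/-- Given `l ≥ 1` pairwise distinct pairs `(a_k, b_k) ∈ ℕ²` with `a_k p + b_k q < (p−1)(q−1)`,
there is a nodal curve of type `p,q` with exactly `l` nodes `(ξ_1,η_1), …, (ξ_l,η_l)` such that
`det((ξ_i^{a_k} η_i^{b_k})_{i,k}) ≠ 0`. -/
theorem nodal_curve_with_nonvanishing_node_determinant_exists
    (K : Type) [Field K] [IsAlgClosed K] [CharZero K]
    (p q : ℕ) (hp : 1 < p) (hpq : p < q) (hco : Nat.Coprime p q)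
    (l : ℕ) (hl : 1 ≤ l) (gp : Fin l → ℕ × ℕ) (hinj : Function.Injective gp)
    (hgp : ∀ k, (gp k).1 * p + (gp k).2 * q < (p - 1) * (q - 1)) :
    ∃ (a : idxSet p q → K) (P : Fin l → K × K),
      Function.Injective P ∧
      (∀ Q : K × K, IsSingAt K (wPoly K p q a) Q ↔ ∃ i, Q = P i) ∧
      (∀ i, IsNodeAt K (wPoly K p q a) (P i)) ∧
      (Matrix.of fun i k : Fin l => (P i).1 ^ (gp k).1 * (P i).2 ^ (gp k).2).det ≠ 0 := by
  have hq : 1 < q := hp.trans hpq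
  have hne : NeZero ((2 * (p * q) : ℕ) : K) := ⟨Nat.cast_ne_zero.mpr (by positivity)⟩
  obtain ⟨ζ, hζ⟩ := HasEnoughRootsOfUnity.exists_primitiveRoot K (2 * (p * q))
  have hbij := chebyshevNode_interpolation hp hq hco hζ
  have hzero := eval_chebyshevCurve_chebyshevPoint_eq_zero_iff hp hq hζ
  have hgap (k : Fin l) : gp k ∈ gapSet p q := mem_gapSet.mpr (hgp k)
  obtain ⟨e, he⟩ := ((linearIndependent_iff_injective_fintypeLinearCombination.mpr hbij.1).comp
    (fun k => (⟨gp k, hgap k⟩ : gapSet p q))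
    fun k k' h => hinj (congrArg Subtype.val h)).exists_det_ne_zero
  have he_inj : Function.Injective e := by
    intro i i' h
    by_contra hii
    exact he (Matrix.det_zero_of_row_eq hii (by ext k; simp [h]))
  obtain ⟨t, Q, hQinj, hQcrit, hQhess, hQzero, hQdet⟩ := exists_nodal_deformation
    (chebyshevCurve K p q) (fun m : gapSet p q => X 0 ^ m.1.1 * X 1 ^ m.1.2)
    (chebyshevPoint ζ p q) (chebyshevPoint_injective hp hq hζ)
    (eval_pderiv_chebyshevPoint hp hq hζ) (eval_hessPoly_chebyshevPoint_ne_zero hp hq hζ)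
    (fun w => by
      obtain ⟨h, hh⟩ := hbij.2 fun z => w z
      refine ⟨h, fun z hz => ?_⟩
      have := congrFun hh ⟨z, (hzero z).mp hz⟩
      simpa [Fintype.linearCombination_apply] using this)
    (Set.range fun i => (e i).1)
    (by
      rintro _ ⟨i, rfl⟩
      exact (hzero _).mpr (e i).2)
    (fun i => (e i).1) (fun k => X 0 ^ (gp k).1 * X 1 ^ (gp k).2) (by simpa using he)
  obtain ⟨a, ha⟩ := exists_wPoly_eq (by omega) (by omega) t
  rw [ha] at hQcrit hQhess hQzero
  have hvec (x : Fin 2 → K) : ![x 0, x 1] = x := by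
    ext k
    fin_cases k <;> rfl
  have hsing (i : Fin l) : IsSingAt K (wPoly K p q a) (Q (e i) 0, Q (e i) 1) := by
    simp only [IsSingAt, hvec]
    exact ⟨(hQzero _).mpr ⟨i, rfl⟩, hQcrit _ 0, hQcrit _ 1⟩
  refine ⟨a, fun i => (Q (e i) 0, Q (e i) 1), ?_, fun R => ⟨?_, ?_⟩, fun i => ⟨hsing i, ?_⟩, ?_⟩
  · intro i i' h
    have hQ : Q (e i) = Q (e i') := by
      rw [← hvec (Q (e i)), ← hvec (Q (e i'))]
      simp only [Prod.mk.injEq] at h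
      rw [h.1, h.2]
    exact he_inj (Subtype.ext (hQinj hQ))
  · rintro ⟨hR, hR0, hR1⟩
    obtain ⟨z, hz⟩ : ∃ z, Q z = ![R.1, R.2] := by
      by_contra! hnot
      have hcard := card_critical_points_le (by omega) (by omega) a
        (fun o : Option (Fin (q - 1) × Fin (p - 1)) => o.elim ![R.1, R.2] Q)
        (Option.injective_iff.mpr ⟨hQinj, by rintro ⟨z, hz⟩; exact hnot z hz⟩)
        (by
          rintro (_ | z) k
          · fin_cases k
            exacts [hR0, hR1]
          · exact hQcrit z k)
      rw [Fintype.card_option, Fintype.card_prod, Fintype.card_fin, Fintype.card_fin,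
        mul_comm (q - 1)] at hcard
      omega
    obtain ⟨i, rfl⟩ := (hQzero z).mp (hz ▸ hR)
    exact ⟨i, by simp only [hz]; rfl⟩
  · rintro ⟨i, rfl⟩
    exact hsing i
  · simpa only [hvec] using hQhess (e i)
  · simpa using hQdet
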